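/- (Radial stability inequality) Let n ≥ 2, m ≥ 1, p > 1, and let u = (u_1,…,u_m) be a radial stable solution of the p-Laplacian system −div(|∇u_i|^{p−2}∇u_i) = H_i(u) on ℝⁿ, i.e. u_i(x) = v_i(|x|) with v_i : [0,∞) → ℝ of class C², and ∂_j H_i(u(x)) ∂_i H_j(u(x)) > 0 for all i, j, x. Then for every φ ∈ L^∞(ℝⁿ) ∩ W^{1,2}(ℝⁿ) with compact support: (n−1) ∑_{i=1}^m ∫_{ℝⁿ} |v_i'(|x|)|^p |x|^{−2} φ(x)² dx ≤ (p−1) ∑_{i=1}^m ∫_{ℝⁿ} |v_i'(|x|)|^p |∇φ(x)|² dx + ∑_{i,j=1}^m ∫_{ℝⁿ} ( ∂_j H_i(u(x)) − √(∂_j H_i(u(x)) ∂_i H_j(u(x))) ) v_i'(|x|) v_j'(|x|) φ(x)² dx. -/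

import Mathlib

open MeasureTheory Metric Finset Filter
open scoped RealInnerProductSpace

noncomputable section

/-- Divergence of a vector field on Euclidean space. -/
def vdiv {n : ℕ} (F : EuclideanSpace ℝ (Fin n) → EuclideanSpace ℝ (Fin n))
    (x : EuclideanSpace ℝ (Fin n)) : ℝ :=
  ∑ i, fderiv ℝ F x (EuclideanSpace.single i 1) i

/-- The linearized coefficient matrix of the p-Laplacian,
`A(η) = |η|^{p-2} Id + (p-2)|η|^{p-4} η ηᵀ`, acting on a vector `v`. -/
def pAmul {n : ℕ} (p : ℝ) (η v : EuclideanSpace ℝ (Fin n)) :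
    EuclideanSpace ℝ (Fin n) :=
  ‖η‖ ^ (p - 2) • v + ((p - 2) * ‖η‖ ^ (p - 4) * ⟪η, v⟫) • η

/-!
Write `w = v'` for the profile `v` of one component `u`. Differentiating the equation along the
radius shows that `w(|x|)` solves the linearized equation up to the extra term
`(n - 1) |x|⁻² |w|^(p-2) w`, which comes from the curvature of the spheres. For a radial test
function `f(|x|)` put `ζ = w f`. Picone's inequality compares `ζ` with the solution `ψ` of the
linearized system, through the field `(ζ² / ψ) A(∇u) ∇ψ`, while the equation of `w` enters through
the field `(ζ² / w) A(∇u) ∇w`. The difference of the two fields has compact support, so its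
divergence integrates to zero. The sum over the components contains the ratios `∂ⱼHᵢ(u) ψⱼ / ψᵢ`,
which are positive; AM-GM applied to the pairs `(i, j)` and `(j, i)` turns them into
`√(∂ⱼHᵢ(u) ∂ᵢHⱼ(u))`.

Away from the origin the fields are differentiable even where `w` vanishes, since `|w|^p` has a
zero derivative there, but for `p < 2` their divergence is not known to be integrable. The
divergence theorem is therefore used for a gauge integral of Henstock–Kurzweil type, which
integrates every derivative, and only the upper bound of the divergence is integrated in the sense
of Lebesgue.

A general test function `φ` is reduced to radial ones by applying the radial inequality to each
`r ↦ φ (r θ)` and integrating over the unit vectors `θ`. Testing with `φ` directly would not do when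
`p < 2`: the tangential part of `∇φ` would then appear with the constant `1` instead of `p - 1`.
-/

open scoped Gradient Topology

local notation "𝔼" n:max => EuclideanSpace ℝ (Fin n)

section Divergence

variable {n : ℕ} {F G : 𝔼 n → 𝔼 n} {x : 𝔼 n}

lemma vdiv_sub (hF : DifferentiableAt ℝ F x) (hG : DifferentiableAt ℝ G x) :
    vdiv (fun y => F y - G y) x = vdiv F x - vdiv G x := by
  simp [vdiv, fderiv_fun_sub hF hG, Finset.sum_sub_distrib]

lemma vdiv_sum {ι : Type*} [Fintype ι] {F : ι → 𝔼 n → 𝔼 n}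
    (hF : ∀ i, DifferentiableAt ℝ (F i) x) :
    vdiv (fun y => ∑ i, F i y) x = ∑ i, vdiv (F i) x := by
  simp only [vdiv, fderiv_fun_sum fun i _ => hF i, _root_.sum_apply, WithLp.ofLp_sum,
    Finset.sum_apply]
  exact Finset.sum_comm

lemma vdiv_smul {g : 𝔼 n → ℝ} {g' : 𝔼 n} (hg : HasGradientAt g g' x)
    (hF : DifferentiableAt ℝ F x) :
    vdiv (fun y => g y • F y) x = g x * vdiv F x + ⟪g', F x⟫ := by
  simp only [vdiv, (hg.hasFDerivAt.fun_smul hF.hasFDerivAt).fderiv, add_apply,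
    smul_apply, ContinuousLinearMap.smulRight_apply, PiLp.add_apply,
    PiLp.smul_apply, smul_eq_mul, Finset.sum_add_distrib, ← Finset.mul_sum]
  simp [PiLp.inner_apply, mul_comm]

lemma vdiv_id : vdiv (fun y : 𝔼 n => y) x = n := by
  simp [vdiv]

end Divergence

lemma hasIntegral_divergence_of_tsupport_subset_ball {k : ℕ}
    {f : (Fin (k + 1) → ℝ) → Fin (k + 1) → ℝ} (hf : Continuous f)
    {s : Set (Fin (k + 1) → ℝ)} (hs : s.Countable) (hf' : ∀ y ∉ s, DifferentiableAt ℝ f y) {M : ℝ}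
    (hM : tsupport f ⊆ ball 0 M) {I : BoxIntegral.Box (Fin (k + 1))}
    (hlower : ∀ i, I.lower i = -M) (hupper : ∀ i, I.upper i = M) :
    BoxIntegral.HasIntegral.{0, 0, 0} I .GP (fun y => ∑ i, fderiv ℝ f y (Pi.single i 1) i)
      (volume : Measure (Fin (k + 1) → ℝ)).toBoxAdditive.toSMul 0 := by
  have zero_of_face (y : Fin (k + 1) → ℝ) (i : Fin (k + 1)) (hy : |y i| = |M|) : f y = 0 := by
    refine image_eq_zero_of_notMem_tsupport fun hmem => ?_
    have hyM : ‖y‖ < M := mem_ball_zero_iff.1 (hM hmem)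
    have := norm_le_pi_norm y i
    rw [Real.norm_eq_abs, hy] at this
    linarith [le_abs_self M]
  have h := BoxIntegral.hasIntegral_GP_divergence_of_forall_hasDerivWithinAt I f (fderiv ℝ f) s hs
    (fun y _ => hf.continuousWithinAt) fun y hy => (hf' y hy.2).hasFDerivAt.hasFDerivWithinAt
  convert! h
  refine (Finset.sum_eq_zero fun i _ => ?_).symm
  simp [zero_of_face _ i, hlower, hupper]

lemma integral_nonneg_of_sum_fderiv_le {k : ℕ} {f : (Fin (k + 1) → ℝ) → Fin (k + 1) → ℝ}
    (hf : Continuous f) (hcs : HasCompactSupport f) {s : Set (Fin (k + 1) → ℝ)} (hs : s.Countable)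
    (hf' : ∀ y ∉ s, DifferentiableAt ℝ f y) {D : (Fin (k + 1) → ℝ) → ℝ} (hD : Integrable D)
    (hle : ∀ᵐ y, ∑ i, fderiv ℝ f y (Pi.single i 1) i ≤ D y) : 0 ≤ ∫ y, D y := by
  set div : (Fin (k + 1) → ℝ) → ℝ := fun y => ∑ i, fderiv ℝ f y (Pi.single i 1) i
  obtain ⟨M, hM0, hM⟩ := hcs.isBounded.subset_ball_lt 0 0
  let I : BoxIntegral.Box (Fin (k + 1)) := ⟨fun _ => -M, fun _ => M, fun _ => by linarith⟩
  have inside : 0 ≤ ∫ y in I, D y := by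
    have hdiv : BoxIntegral.HasIntegral.{0, 0, 0} I .GP div
        (volume : Measure (Fin (k + 1) → ℝ)).toBoxAdditive.toSMul 0 :=
      hasIntegral_divergence_of_tsupport_subset_ball hf hs hf' hM (fun _ => rfl) fun _ => rfl
    -- The box integral is monotone only for inequalities at every point, so `D` is first raised to
    -- `div` on the null set where `D < div`.
    have hmax : D =ᵐ[volume.restrict I] fun y => max (D y) (div y) :=
      ae_restrict_of_ae (hle.mono fun y hy => (max_eq_left hy).symm)
    have hDmax := (hD.integrableOn.hasBoxIntegral (I := I) .GP rfl).congr_ae hmax rfl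
    have hsub := (hDmax.sub hdiv).integral_eq
    rw [sub_zero] at hsub
    exact (BoxIntegral.integral_nonneg (I := I) (l := .GP)
      (g := (fun y => max (D y) (div y)) - div) (fun y _ => by simp) volume).trans_eq hsub
  have outside : 0 ≤ ∫ y in (I : Set (Fin (k + 1) → ℝ))ᶜ, D y := by
    refine setIntegral_nonneg_of_ae_restrict ?_
    filter_upwards [ae_restrict_of_ae hle, ae_restrict_mem I.measurableSet_coe.compl] with y hy hyI
    have hy0 : f =ᶠ[𝓝 y] 0 := by
      refine notMem_tsupport_iff_eventuallyEq.1 fun hmem => hyI fun i => ?_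
      have := (norm_le_pi_norm y i).trans_lt (mem_ball_zero_iff.1 (hM hmem))
      exact ⟨(abs_lt.1 this).1, (abs_lt.1 this).2.le⟩
    simpa [div, hy0.fderiv_eq] using hy
  rw [← integral_add_compl I.measurableSet_coe hD]
  exact add_nonneg inside outside

/-- `D` dominates, almost everywhere, the divergence of some continuous compactly supported vector
field that is differentiable off a countable set. -/
def DominatesDivergence {n : ℕ} (D : 𝔼 n → ℝ) : Prop :=
  ∃ F : 𝔼 n → 𝔼 n, ∃ s : Set (𝔼 n), s.Countable ∧ Continuous F ∧ HasCompactSupport F ∧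
    (∀ x ∉ s, DifferentiableAt ℝ F x) ∧ ∀ᵐ x, vdiv F x ≤ D x

namespace DominatesDivergence

variable {n : ℕ}

lemma mono {D D' : 𝔼 n → ℝ} (hD : DominatesDivergence D) (h : ∀ x, D x ≤ D' x) :
    DominatesDivergence D' := by
  obtain ⟨F, s, hs, hF, hFc, hFs, hFD⟩ := hD
  exact ⟨F, s, hs, hF, hFc, hFs, hFD.mono fun x hx => hx.trans (h x)⟩

lemma sum [NeZero n] {ι : Type*} [Fintype ι] {D : ι → 𝔼 n → ℝ}
    (hD : ∀ i, DominatesDivergence (D i)) : DominatesDivergence fun x => ∑ i, D i x := by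
  choose F s hs hF hFc hFs hFD using hD
  refine ⟨fun x => ∑ i, F i x, ⋃ i, s i, Set.countable_iUnion hs,
    continuous_finsetSum _ fun i _ => hF i, ?_, fun x hx => ?_, ?_⟩
  · simpa only [Finset.sum_fn] using! HasCompactSupport.finset_sum fun i _ => hFc i
  · exact DifferentiableAt.fun_sum fun i _ => hFs i x fun hxi => hx (Set.mem_iUnion_of_mem i hxi)
  · filter_upwards [ae_all_iff.2 hFD, (Set.countable_iUnion hs).ae_notMem volume] with x hx hxs
    rw [vdiv_sum fun i => hFs i x fun hxi => hxs (Set.mem_iUnion_of_mem i hxi)]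
    exact Finset.sum_le_sum fun i _ => hx i

theorem integral_nonneg {D : 𝔼 n → ℝ} (hD : DominatesDivergence D) (hint : Integrable D) :
    0 ≤ ∫ x, D x := by
  obtain ⟨F, s, hs, hF, hFc, hFs, hFD⟩ := hD
  obtain _ | k := n
  · exact MeasureTheory.integral_nonneg_of_ae <| hFD.mono fun x hx => by simpa [vdiv] using hx
  let L := EuclideanSpace.equiv (Fin (k + 1)) ℝ
  have hvol := PiLp.volume_preserving_toLp (Fin (k + 1))
  have hemb := (MeasurableEquiv.toLp 2 (Fin (k + 1) → ℝ)).measurableEmbedding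
  rw [← hvol.integral_comp hemb]
  refine integral_nonneg_of_sum_fderiv_le (f := L ∘ F ∘ L.symm) (s := L '' s) (by fun_prop)
    ((hFc.comp_homeomorph L.symm.toHomeomorph).comp_left L.map_zero) (hs.image L) ?_
    ((hvol.integrable_comp_emb hemb).2 hint) ?_
  · intro y hy
    have hFy : DifferentiableAt ℝ F (L.symm y) := hFs _ fun h => hy ⟨_, h, L.apply_symm_apply y⟩
    fun_prop
  · filter_upwards [hvol.quasiMeasurePreserving.ae hFD] with y hy
    convert! hy
    rw [L.comp_fderiv, ContinuousLinearEquiv.comp_right_fderiv]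
    rfl

end DominatesDivergence

section RadialFunctions

variable {E : Type*} [NormedAddCommGroup E] [InnerProductSpace ℝ E]

lemma norm_div_norm_smul {x : E} (hx : x ≠ 0) (a : ℝ) : ‖(a / ‖x‖) • x‖ = |a| := by
  rw [norm_smul, norm_div, norm_norm, Real.norm_eq_abs, div_mul_cancel₀ _ (norm_ne_zero_iff.2 hx)]

lemma hasGradientAt_norm [CompleteSpace E] {x : E} (hx : x ≠ 0) :
    HasGradientAt (fun y : E => ‖y‖) (‖x‖⁻¹ • x) x := by
  have hsqrt := (hasStrictFDerivAt_norm_sq x).hasFDerivAt.sqrt (by simpa)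
  simp only [Real.sqrt_sq (norm_nonneg _)] at hsqrt
  refine hasGradientAt_iff_hasFDerivAt.2 (hsqrt.congr_fderiv ?_)
  ext y
  simp
  field

lemma hasGradientAt_comp_norm [CompleteSpace E] {f : ℝ → ℝ} {f' : ℝ} {x : E}
    (hf : HasDerivAt f f' ‖x‖) (hx : x = 0 → f' = 0) :
    HasGradientAt (fun y => f ‖y‖) ((f' / ‖x‖) • x) x := by
  obtain rfl | hx0 := eq_or_ne x 0
  · have hlittle := (hasDerivAt_iff_isLittleO.1 hf).comp_tendsto
      (continuous_norm (E := E)).continuousAt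
    rw [smul_zero, hasGradientAt_iff_isLittleO]
    exact Asymptotics.isLittleO_norm_right.1 (by simpa [hx rfl, Function.comp_def] using hlittle)
  · refine hasGradientAt_iff_hasFDerivAt.2
      ((hf.comp_hasFDerivAt x (hasGradientAt_norm hx0).hasFDerivAt).congr_fderiv ?_)
    rw [div_eq_mul_inv, mul_smul]
    simp only [map_smulₛₗ, conj_trivial]

lemma deriv_zero_of_differentiableAt_comp_norm [Nontrivial E] {v : ℝ → ℝ}
    (hv : DifferentiableAt ℝ v 0) (hu : DifferentiableAt ℝ (fun y : E => v ‖y‖) 0) :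
    deriv v 0 = 0 := by
  obtain ⟨e, he⟩ := exists_norm_eq E zero_le_one
  have hline : DifferentiableAt ℝ (fun t : ℝ => v |t|) 0 := by
    have : (fun t : ℝ => v |t|) = (fun y : E => v ‖y‖) ∘ fun t : ℝ => t • e := by
      ext t
      simp [norm_smul, he]
    rw [this]
    exact DifferentiableAt.comp _ (by simpa using hu) (by fun_prop)
  have heven : deriv (fun t : ℝ => v |t|) 0 = 0 := by
    have := deriv_comp_neg (fun t : ℝ => v |t|) 0
    simp only [abs_neg, neg_zero] at this
    linarith
  have hright : HasDerivWithinAt v 0 (Set.Ici 0) 0 :=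
    (heven ▸ hline.hasDerivAt).hasDerivWithinAt.congr
      (fun t (ht : 0 ≤ t) => by rw [abs_of_nonneg ht]) (by simp)
  exact (uniqueDiffWithinAt_Ici (0 : ℝ)).eq_deriv _ hv.hasDerivAt.hasDerivWithinAt hright

lemma continuous_div_norm_smul {κ : ℝ → ℝ} (hκ : Continuous κ) (hκ0 : κ 0 = 0) :
    Continuous fun x : E => (κ ‖x‖ / ‖x‖) • x := by
  refine continuous_iff_continuousAt.2 fun x => ?_
  obtain rfl | hx := eq_or_ne x 0
  · have hlim : Tendsto (fun y : E => |κ ‖y‖|) (𝓝 0) (𝓝 0) := by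
      have : Continuous fun y : E => |κ ‖y‖| := by fun_prop
      simpa [hκ0] using this.tendsto 0
    rw [ContinuousAt, smul_zero]
    refine squeeze_zero_norm (fun y => ?_) hlim
    obtain rfl | hy := eq_or_ne y 0
    · simp
    · exact (norm_div_norm_smul hy _).le
  · have : ‖x‖ ≠ 0 := norm_ne_zero_iff.2 hx
    fun_prop (disch := assumption)

end RadialFunctions

lemma continuous_div_id {g : ℝ → ℝ} (hg : Continuous g) (hg0 : g 0 = 0) (hg' : HasDerivAt g 0 0) :
    Continuous fun r => g r / r := by
  have hslope : (fun r => g r / r) = dslope g 0 := by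
    ext r
    obtain rfl | hr := eq_or_ne r 0
    · simp [hg'.deriv]
    · rw [dslope_of_ne _ hr, slope_def_field, hg0, sub_zero, sub_zero]
  rw [hslope]
  refine continuous_iff_continuousAt.2 fun r => ?_
  obtain rfl | hr := eq_or_ne r 0
  · exact continuousAt_dslope_same.2 hg'.differentiableAt
  · exact (continuousAt_dslope_of_ne hr).2 hg.continuousAt

section RadialFields

variable {n : ℕ} {κ : ℝ → ℝ} {κ' : ℝ} {x : 𝔼 n}

lemma hasGradientAt_div_norm (hx : x ≠ 0) (hκ : HasDerivAt κ κ' ‖x‖) :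
    HasGradientAt (fun y : 𝔼 n => κ ‖y‖ / ‖y‖)
      (((κ' * ‖x‖ - κ ‖x‖) / ‖x‖ ^ 2 / ‖x‖) • x) x := by
  have hquot := hκ.fun_div (hasDerivAt_id ‖x‖) (norm_ne_zero_iff.2 hx)
  simp only [id, mul_one] at hquot
  exact hasGradientAt_comp_norm hquot fun h => absurd h hx

lemma differentiableAt_div_norm_smul (hx : x ≠ 0) (hκ : HasDerivAt κ κ' ‖x‖) :
    DifferentiableAt ℝ (fun y : 𝔼 n => (κ ‖y‖ / ‖y‖) • y) x :=
  (hasGradientAt_div_norm hx hκ).differentiableAt.smul differentiableAt_id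

lemma vdiv_div_norm_smul (hx : x ≠ 0) (hκ : HasDerivAt κ κ' ‖x‖) :
    vdiv (fun y : 𝔼 n => (κ ‖y‖ / ‖y‖) • y) x = κ' + (n - 1) * κ ‖x‖ / ‖x‖ := by
  have hx' : ‖x‖ ≠ 0 := norm_ne_zero_iff.2 hx
  rw [vdiv_smul (hasGradientAt_div_norm hx hκ) differentiableAt_fun_id, vdiv_id,
    real_inner_smul_left, real_inner_self_eq_norm_sq]
  field

end RadialFields

section SimpleZeros

lemma countable_setOf_zero_of_deriv_ne_zero {w w' : ℝ → ℝ} (hw : ∀ r, HasDerivAt w (w' r) r) :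
    {r | w r = 0 ∧ w' r ≠ 0}.Countable := by
  have hdiscrete : DiscreteTopology {r | w r = 0 ∧ w' r ≠ 0} := by
    rw [discreteTopology_subtype_iff]
    rintro r ⟨-, hr⟩
    rw [← disjoint_iff, Filter.disjoint_principal_right]
    filter_upwards [(hw r).eventually_ne (c := 0) hr] with s hs hsZ using hs hsZ.1
  exact (HereditarilyLindelofSpace.isLindelof _).countable hdiscrete

lemma ae_deriv_norm_eq_zero_of_zero {E : Type*} [NormedAddCommGroup E] [NormedSpace ℝ E]
    [FiniteDimensional ℝ E] [Nontrivial E] [MeasurableSpace E] [BorelSpace E]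
    (μ : Measure E) [μ.IsAddHaarMeasure] {w w' : ℝ → ℝ} (hw : ∀ r, HasDerivAt w (w' r) r) :
    ∀ᵐ x ∂μ, w ‖x‖ = 0 → w' ‖x‖ = 0 := by
  have hnull : μ (⋃ r ∈ {r | w r = 0 ∧ w' r ≠ 0}, sphere (0 : E) r) = 0 :=
    (measure_biUnion_null_iff (countable_setOf_zero_of_deriv_ne_zero hw)).2 fun r _ =>
      Measure.addHaar_sphere μ 0 r
  filter_upwards [measure_eq_zero_iff_ae_notMem.1 hnull] with x hx hx0
  by_contra hx'
  exact hx (Set.mem_biUnion ⟨hx0, hx'⟩ (mem_sphere_zero_iff_norm.2 rfl))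

end SimpleZeros

section Powers

lemma rpow_sub_two_mul_sq {t : ℝ} (ht : t ≠ 0) (q : ℝ) : t ^ (q - 2) * t ^ 2 = t ^ q := by
  have := Real.rpow_sub_natCast ht q 2
  push_cast at this
  rw [this, div_mul_cancel₀ _ (pow_ne_zero 2 ht)]

lemma abs_rpow_sub_two_mul_sq {p : ℝ} (hp : p ≠ 0) (s : ℝ) : |s| ^ (p - 2) * s ^ 2 = |s| ^ p := by
  obtain rfl | hs := eq_or_ne s 0
  · simp [hp]
  · rw [← sq_abs, rpow_sub_two_mul_sq (abs_ne_zero.2 hs)]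

lemma hasDerivAt_abs_rpow_mul_self (q : ℝ) {s : ℝ} (hs : s ≠ 0) :
    HasDerivAt (fun t : ℝ => |t| ^ q * t) ((q + 1) * |s| ^ q) s := by
  have habs := (hasDerivAt_abs hs).rpow_const (p := q) (Or.inl (abs_ne_zero.2 hs))
  refine (habs.fun_mul (hasDerivAt_id' s)).congr_deriv ?_
  have hpow : |s| ^ q = |s| ^ (q - 1) * |s| := by
    rw [← Real.rpow_add_one (abs_ne_zero.2 hs), sub_add_cancel]
  linear_combination (q * |s| ^ (q - 1)) * sign_mul_self s - q * hpow

end Powers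

section LinearizedMatrix

variable {n : ℕ} {p : ℝ}

lemma inner_pAmul (p : ℝ) (η v z : 𝔼 n) :
    ⟪z, pAmul p η v⟫ = ‖η‖ ^ (p - 2) * ⟪z, v⟫ + (p - 2) * ‖η‖ ^ (p - 4) * ⟪η, v⟫ * ⟪η, z⟫ := by
  rw [pAmul, inner_add_right, inner_smul_right, inner_smul_right, real_inner_comm η z]

lemma inner_pAmul_self_nonneg (hp : 1 ≤ p) (η v : 𝔼 n) : 0 ≤ ⟪v, pAmul p η v⟫ := by
  rw [inner_pAmul, real_inner_self_eq_norm_sq]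
  obtain rfl | hη := eq_or_ne η 0
  · simp only [inner_zero_left, mul_zero, add_zero]
    positivity
  have hsplit : ‖η‖ ^ (p - 2) = ‖η‖ ^ (p - 4) * ‖η‖ ^ 2 := by
    rw [← rpow_sub_two_mul_sq (norm_ne_zero_iff.2 hη) (p - 2)]
    ring_nf
  have hcs : ⟪η, v⟫ * ⟪η, v⟫ ≤ ‖η‖ ^ 2 * ‖v‖ ^ 2 := by
    simpa [← sq, mul_pow] using real_inner_mul_inner_self_le η v
  calc 0 ≤ ‖η‖ ^ (p - 4) * ((p - 1) * (⟪η, v⟫ * ⟪η, v⟫)) :=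
        mul_nonneg (by positivity) (mul_nonneg (by linarith) (mul_self_nonneg _))
    _ ≤ ‖η‖ ^ (p - 4) * (‖η‖ ^ 2 * ‖v‖ ^ 2 + (p - 2) * (⟪η, v⟫ * ⟪η, v⟫)) := by
        gcongr
        linarith
    _ = _ := by rw [hsplit]; ring

lemma two_mul_inner_pAmul_sub_le (hp : 1 ≤ p) (η v z : 𝔼 n) (t : ℝ) :
    2 * t * ⟪v, pAmul p η z⟫ - t ^ 2 * ⟪v, pAmul p η v⟫ ≤ ⟪z, pAmul p η z⟫ := by
  have h := inner_pAmul_self_nonneg hp η (z - t • v)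
  simp only [inner_pAmul, inner_sub_left, inner_sub_right, real_inner_smul_left,
    inner_smul_right, real_inner_comm v z] at h ⊢
  linarith

lemma norm_pAmul_le (p : ℝ) (η v : 𝔼 n) :
    ‖pAmul p η v‖ ≤ (1 + |p - 2|) * ‖η‖ ^ (p - 2) * ‖v‖ := by
  obtain rfl | hη := eq_or_ne η 0
  · simp only [pAmul, inner_zero_left, mul_zero, zero_smul, add_zero, norm_smul]
    rw [Real.norm_of_nonneg (by positivity), mul_assoc, one_add_mul]
    exact le_add_of_nonneg_right (by positivity)
  have hsplit : ‖η‖ ^ (p - 2) = ‖η‖ ^ (p - 4) * ‖η‖ ^ 2 := by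
    rw [← rpow_sub_two_mul_sq (norm_ne_zero_iff.2 hη) (p - 2)]
    ring_nf
  calc ‖pAmul p η v‖
      ≤ ‖‖η‖ ^ (p - 2) • v‖ + ‖((p - 2) * ‖η‖ ^ (p - 4) * ⟪η, v⟫) • η‖ := norm_add_le _ _
    _ = ‖η‖ ^ (p - 2) * ‖v‖ + |p - 2| * ‖η‖ ^ (p - 4) * |⟪η, v⟫| * ‖η‖ := by
        simp [norm_smul, abs_of_nonneg, Real.rpow_nonneg]
    _ ≤ ‖η‖ ^ (p - 2) * ‖v‖ + |p - 2| * ‖η‖ ^ (p - 4) * (‖η‖ * ‖v‖) * ‖η‖ := by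
        gcongr
        exact abs_real_inner_le_norm η v
    _ = _ := by rw [hsplit]; ring

lemma inner_pAmul_div_norm_smul {x : 𝔼 n} (hx : x ≠ 0) (a : ℝ) {b : ℝ} (hb : b ≠ 0) :
    ⟪(a / ‖x‖) • x, pAmul p ((b / ‖x‖) • x) ((a / ‖x‖) • x)⟫ = (p - 1) * |b| ^ (p - 2) * a ^ 2 := by
  have hx' : ‖x‖ ≠ 0 := norm_ne_zero_iff.2 hx
  have hsplit : |b| ^ (p - 2) = |b| ^ (p - 4) * b ^ 2 := by
    rw [← sq_abs b, ← rpow_sub_two_mul_sq (abs_ne_zero.2 hb) (p - 2)]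
    ring_nf
  simp only [inner_pAmul, norm_div_norm_smul hx, real_inner_smul_left, inner_smul_right,
    real_inner_self_eq_norm_sq, hsplit]
  field

lemma differentiableAt_pAmul {η g : 𝔼 n → 𝔼 n} {x : 𝔼 n} (hη : DifferentiableAt ℝ η x)
    (hg : DifferentiableAt ℝ g x) (hx : η x ≠ 0) :
    DifferentiableAt ℝ (fun y => pAmul p (η y) (g y)) x := by
  have hpow (q : ℝ) : DifferentiableAt ℝ (fun y => ‖η y‖ ^ q) x :=
    (hη.norm ℝ hx).rpow_const (Or.inl (norm_ne_zero_iff.2 hx))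
  have := hpow (p - 2)
  have := hpow (p - 4)
  have := hη.inner ℝ hg
  unfold pAmul
  fun_prop

end LinearizedMatrix

section Picone

variable {n : ℕ} {p : ℝ} {η : 𝔼 n → 𝔼 n} {ψ ζ : 𝔼 n → ℝ} {x : 𝔼 n}

/-- Picone's comparison field `(ζ² / ψ) A(η) ∇ψ`: its divergence bounds the quadratic form
`⟪∇ζ, A(η) ∇ζ⟫` from below in terms of the linearized operator applied to `ψ`. -/
def piconeField (p : ℝ) (η : 𝔼 n → 𝔼 n) (ψ ζ : 𝔼 n → ℝ) (y : 𝔼 n) : 𝔼 n :=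
  (ζ y ^ 2 / ψ y) • pAmul p (η y) (gradient ψ y)

lemma hasGradientAt_sq_div {z w : 𝔼 n} (hζ : HasGradientAt ζ z x) (hψ : HasGradientAt ψ w x)
    (hx : ψ x ≠ 0) :
    HasGradientAt (fun y => ζ y ^ 2 / ψ y)
      ((2 * (ζ x / ψ x)) • z - (ζ x / ψ x) ^ 2 • w) x := by
  have hinv := (hasDerivAt_inv hx).comp_hasFDerivAt x hψ.hasFDerivAt
  refine hasGradientAt_iff_hasFDerivAt.2 <|
    ((hζ.hasFDerivAt.pow 2).fun_mul hinv).congr_fderiv ?_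
  ext y
  simp
  field

theorem vdiv_piconeField_le (hp : 1 ≤ p) {z : 𝔼 n} (hζ : HasGradientAt ζ z x)
    (hψ : DifferentiableAt ℝ ψ x) (hx : ψ x ≠ 0)
    (hA : DifferentiableAt ℝ (fun y => pAmul p (η y) (gradient ψ y)) x) :
    vdiv (piconeField p η ψ ζ) x ≤
      ζ x ^ 2 / ψ x * vdiv (fun y => pAmul p (η y) (gradient ψ y)) x + ⟪z, pAmul p (η x) z⟫ := by
  unfold piconeField
  rw [vdiv_smul (hasGradientAt_sq_div hζ hψ.hasGradientAt hx) hA, inner_sub_left,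
    real_inner_smul_left, real_inner_smul_left]
  have hsymm : ⟪z, pAmul p (η x) (gradient ψ x)⟫ = ⟪gradient ψ x, pAmul p (η x) z⟫ := by
    rw [inner_pAmul, inner_pAmul, real_inner_comm z (gradient ψ x)]
    ring
  have := two_mul_inner_pAmul_sub_le hp (η x) (gradient ψ x) z (ζ x / ψ x)
  rw [hsymm]
  linarith

end Picone

lemma hasFDerivAt_zero_of_norm_le {E F : Type*} [NormedAddCommGroup E] [NormedSpace ℝ E]
    [NormedAddCommGroup F] [NormedSpace ℝ F] {G : E → F} {C g : E → ℝ} {x : E}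
    (hG : ∀ y, ‖G y‖ ≤ C y * g y) (hC : ContinuousAt C x)
    (hg : HasFDerivAt g (0 : E →L[ℝ] ℝ) x) (hgx : g x = 0) : HasFDerivAt G (0 : E →L[ℝ] F) x := by
  have hGx : G x = 0 := norm_le_zero_iff.1 (by simpa [hgx] using hG x)
  have hlittle := hg.isLittleO
  simp only [hgx, sub_zero, zero_apply] at hlittle
  refine HasFDerivAt.of_isLittleO ?_
  simp only [hGx, sub_zero, zero_apply]
  refine (Asymptotics.IsBigO.of_norm_le hG).trans_isLittleO ?_
  simpa using (hC.isBigO_one ℝ).mul_isLittleO hlittle.norm_right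

lemma hasCompactSupport_comp_norm {E : Type*} [NormedAddCommGroup E] [ProperSpace E] {f : ℝ → ℝ}
    (hf : HasCompactSupport f) : HasCompactSupport fun x : E => f ‖x‖ := by
  rw [hasCompactSupport_iff_eventuallyEq, coclosedCompact_eq_cocompact] at hf ⊢
  exact tendsto_norm_cocompact_atTop.eventually (hf.filter_mono atTop_le_cocompact)

lemma contDiff_gradient {E : Type*} [NormedAddCommGroup E] [InnerProductSpace ℝ E]
    [CompleteSpace E] {ψ : E → ℝ} (hψ : ContDiff ℝ 2 ψ) : ContDiff ℝ 1 (gradient ψ) :=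
  (InnerProductSpace.toDual ℝ E).symm.toContinuousLinearEquiv.contDiff.comp
    (hψ.fderiv_right (by norm_num))

/-- `u` is a radial `C²` solution, with profile `v`, of the `p`-Laplace equation
`-div (|∇u|^(p-2) ∇u) = h(|x|)`. For the `i`-th equation of a system, `h` is `Hᵢ` along the
profiles. -/
structure IsRadialSolution {n : ℕ} (p : ℝ) (h v : ℝ → ℝ) (u : 𝔼 n → ℝ) : Prop where
  contDiff : ContDiff ℝ 2 u
  contDiff_profile : ContDiff ℝ 2 v
  eq_profile : ∀ x, u x = v ‖x‖
  neg_vdiv_eq : ∀ x, -vdiv (fun y => ‖gradient u y‖ ^ (p - 2) • gradient u y) x = h ‖x‖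

/-- The radial component of the flux `(ζ² / w) A(∇u) ∇w` for `w = v'` and `ζ = w f`, where the
second derivatives of `v` have been eliminated by the equation. In this form it is differentiable
at the zeros of `v'`. -/
def radialFlux (n : ℕ) (p : ℝ) (h v f : ℝ → ℝ) (r : ℝ) : ℝ :=
  -(deriv v r * h r + (n - 1) * (|deriv v r| ^ p / r)) * f r ^ 2

/-- The integrand of the stability inequality for `u(x) = v(|x|)` and the radial test function
`f(|x|)`, where `h` is the right-hand side and `c` the potential of the linearized equation. -/
def radialStabilityDensity {n : ℕ} (p : ℝ) (h v : ℝ → ℝ) (c : 𝔼 n → ℝ) (f : ℝ → ℝ) (x : 𝔼 n) : ℝ :=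
  (p - 1) * |deriv v ‖x‖| ^ p * deriv f ‖x‖ ^ 2
    - (n - 1) * (|deriv v ‖x‖| ^ p / ‖x‖ ^ 2) * f ‖x‖ ^ 2
    + (deriv v ‖x‖ * deriv h ‖x‖ - c x * deriv v ‖x‖ ^ 2) * f ‖x‖ ^ 2

namespace IsRadialSolution

variable {n : ℕ} {p : ℝ} {h v f : ℝ → ℝ} {u ψ : 𝔼 n → ℝ} {x : 𝔼 n}

lemma hasDerivAt_deriv_profile (hu : IsRadialSolution p h v u) (r : ℝ) :
    HasDerivAt (deriv v) (deriv (deriv v) r) r :=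
  ((hu.contDiff_profile.iterate_deriv' 1 1).differentiable one_ne_zero r).hasDerivAt

lemma hasDerivAt_abs_rpow_deriv_profile (hu : IsRadialSolution p h v u) (hp : 1 < p) (r : ℝ) :
    HasDerivAt (fun s => |deriv v s| ^ p)
      (p * |deriv v r| ^ (p - 2) * deriv v r * deriv (deriv v) r) r :=
  (hasDerivAt_abs_rpow (deriv v r) hp).comp r (hu.hasDerivAt_deriv_profile r)

lemma hasGradientAt_deriv_profile_mul (hu : IsRadialSolution p h v u) (hx : x ≠ 0)
    (hf : DifferentiableAt ℝ f ‖x‖) :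
    HasGradientAt (fun y : 𝔼 n => deriv v ‖y‖ * f ‖y‖)
      (((deriv (deriv v) ‖x‖ * f ‖x‖ + deriv v ‖x‖ * deriv f ‖x‖) / ‖x‖) • x) x :=
  hasGradientAt_comp_norm ((hu.hasDerivAt_deriv_profile _).fun_mul hf.hasDerivAt)
    fun hx0 => absurd hx0 hx

section Gradient

variable [NeZero n]

lemma deriv_profile_zero (hu : IsRadialSolution p h v u) : deriv v 0 = 0 := by
  have hcomp : u = fun y => v ‖y‖ := funext hu.eq_profile
  exact deriv_zero_of_differentiableAt_comp_norm (E := 𝔼 n)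
    (hu.contDiff_profile.differentiable two_ne_zero 0)
    (hcomp ▸ hu.contDiff.differentiable two_ne_zero 0)

lemma gradient_eq (hu : IsRadialSolution p h v u) (x : 𝔼 n) :
    gradient u x = (deriv v ‖x‖ / ‖x‖) • x := by
  rw [funext hu.eq_profile]
  refine (hasGradientAt_comp_norm ?_ ?_).gradient
  · exact (hu.contDiff_profile.differentiable two_ne_zero _).hasDerivAt
  · rintro rfl
    rw [norm_zero, hu.deriv_profile_zero]

lemma norm_gradient (hu : IsRadialSolution p h v u) (x : 𝔼 n) :
    ‖gradient u x‖ = |deriv v ‖x‖| := by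
  rw [hu.gradient_eq]
  obtain rfl | hx := eq_or_ne x 0
  · simp [hu.deriv_profile_zero]
  · exact norm_div_norm_smul hx _

lemma ne_zero_of_deriv_profile_ne_zero (hu : IsRadialSolution p h v u) (hw : deriv v ‖x‖ ≠ 0) :
    x ≠ 0 := by
  rintro rfl
  exact hw (by rw [norm_zero, hu.deriv_profile_zero])

lemma rhs_eq (hu : IsRadialSolution p h v u) (hw : deriv v ‖x‖ ≠ 0) :
    h ‖x‖ = -((p - 1) * |deriv v ‖x‖| ^ (p - 2) * deriv (deriv v) ‖x‖
      + (n - 1) * (|deriv v ‖x‖| ^ (p - 2) * deriv v ‖x‖) / ‖x‖) := by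
  have hflux : (fun y => ‖gradient u y‖ ^ (p - 2) • gradient u y) =
      fun y => (|deriv v ‖y‖| ^ (p - 2) * deriv v ‖y‖ / ‖y‖) • y := by
    ext1 y
    rw [hu.norm_gradient, hu.gradient_eq, smul_smul, mul_div_assoc]
  have hderiv : HasDerivAt (fun r => |deriv v r| ^ (p - 2) * deriv v r)
      ((p - 2 + 1) * |deriv v ‖x‖| ^ (p - 2) * deriv (deriv v) ‖x‖) ‖x‖ :=
    (hasDerivAt_abs_rpow_mul_self (p - 2) hw).comp ‖x‖ (hu.hasDerivAt_deriv_profile _)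
  rw [← hu.neg_vdiv_eq, hflux,
    vdiv_div_norm_smul (hu.ne_zero_of_deriv_profile_ne_zero hw) hderiv]
  ring

end Gradient

section RadialFlux

lemma hasDerivAt_radialFlux (hu : IsRadialSolution p h v u) (hp : 1 < p) {r : ℝ} (hr : r ≠ 0)
    (hh : DifferentiableAt ℝ h r) (hf : DifferentiableAt ℝ f r) :
    HasDerivAt (radialFlux n p h v f)
      (-(deriv (deriv v) r * h r + deriv v r * deriv h r
          + (n - 1) * ((p * |deriv v r| ^ (p - 2) * deriv v r * deriv (deriv v) r * r
            - |deriv v r| ^ p) / r ^ 2)) * f r ^ 2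
        - (deriv v r * h r + (n - 1) * (|deriv v r| ^ p / r)) * (2 * f r * deriv f r)) r := by
  have hquot := (hu.hasDerivAt_abs_rpow_deriv_profile hp r).fun_div (hasDerivAt_id' r) hr
  refine ((((hu.hasDerivAt_deriv_profile r).fun_mul hh.hasDerivAt).fun_add
    (hquot.const_mul ((n : ℝ) - 1))).fun_neg.fun_mul (hf.hasDerivAt.fun_pow 2)).congr_deriv ?_
  simp
  ring

variable [NeZero n]

lemma continuous_abs_rpow_deriv_profile_div_id (hu : IsRadialSolution p h v u) (hp : 1 < p) :
    Continuous fun r => |deriv v r| ^ p / r := by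
  have hderiv := hu.hasDerivAt_abs_rpow_deriv_profile hp
  refine continuous_div_id
    (continuous_iff_continuousAt.2 fun r => (hderiv r).continuousAt) ?_ ?_
  · rw [hu.deriv_profile_zero, abs_zero, Real.zero_rpow (by linarith)]
  · simpa [hu.deriv_profile_zero] using hderiv 0

lemma continuous_radialFlux (hu : IsRadialSolution p h v u) (hp : 1 < p) (hh : Continuous h)
    (hf : Continuous f) : Continuous (radialFlux n p h v f) := by
  have := hu.continuous_abs_rpow_deriv_profile_div_id hp
  have := hu.contDiff_profile.continuous_deriv one_le_two
  unfold radialFlux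
  fun_prop

lemma radialFlux_zero (hu : IsRadialSolution p h v u) : radialFlux n p h v f 0 = 0 := by
  simp [radialFlux, hu.deriv_profile_zero]

end RadialFlux

variable [NeZero n] {c : 𝔼 n → ℝ}

section PiconeField

lemma differentiableAt_pAmul_gradient (hu : IsRadialSolution p h v u) (hψ : ContDiff ℝ 2 ψ)
    (hw : deriv v ‖x‖ ≠ 0) :
    DifferentiableAt ℝ (fun y => pAmul p (gradient u y) (gradient ψ y)) x := by
  refine differentiableAt_pAmul ((contDiff_gradient hu.contDiff).differentiable one_ne_zero x)
    ((contDiff_gradient hψ).differentiable one_ne_zero x) (norm_ne_zero_iff.1 ?_)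
  rwa [hu.norm_gradient, abs_ne_zero]

lemma norm_piconeField_le (hu : IsRadialSolution p h v u) (hp : 1 < p) (ψ : 𝔼 n → ℝ) (f : ℝ → ℝ)
    (y : 𝔼 n) :
    ‖piconeField p (gradient u) ψ (fun z => deriv v ‖z‖ * f ‖z‖) y‖ ≤
      (1 + |p - 2|) * (f ‖y‖ ^ 2 / |ψ y| * ‖gradient ψ y‖) * |deriv v ‖y‖| ^ p := by
  calc ‖piconeField p (gradient u) ψ (fun z => deriv v ‖z‖ * f ‖z‖) y‖
      = (deriv v ‖y‖ * f ‖y‖) ^ 2 / |ψ y| * ‖pAmul p (gradient u y) (gradient ψ y)‖ := by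
        rw [piconeField, norm_smul, norm_div, Real.norm_eq_abs, Real.norm_eq_abs, abs_sq]
    _ ≤ (deriv v ‖y‖ * f ‖y‖) ^ 2 / |ψ y| *
          ((1 + |p - 2|) * |deriv v ‖y‖| ^ (p - 2) * ‖gradient ψ y‖) := by
        rw [← hu.norm_gradient]
        gcongr
        exact norm_pAmul_le p _ _
    _ = _ := by
        rw [← abs_rpow_sub_two_mul_sq (by linarith : p ≠ 0)]
        ring

lemma hasFDerivAt_piconeField_zero (hu : IsRadialSolution p h v u) (hp : 1 < p)
    (hψ : ContDiff ℝ 2 ψ) (hψ0 : ψ x ≠ 0) (hf : Continuous f) (hw : deriv v ‖x‖ = 0) :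
    HasFDerivAt (piconeField p (gradient u) ψ fun y => deriv v ‖y‖ * f ‖y‖)
      (0 : 𝔼 n →L[ℝ] 𝔼 n) x := by
  refine hasFDerivAt_zero_of_norm_le (hu.norm_piconeField_le hp ψ f) ?_ ?_ ?_
  · have := (contDiff_gradient hψ).continuous
    have := hψ.continuous
    have := abs_ne_zero.2 hψ0
    fun_prop (disch := assumption)
  · have hgrad := hasGradientAt_comp_norm (hu.hasDerivAt_abs_rpow_deriv_profile hp ‖x‖)
      fun _ => by simp [hw]
    simpa [hw] using hgrad.hasFDerivAt
  · simp [hw, (by linarith : p ≠ 0)]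

lemma differentiable_piconeField (hu : IsRadialSolution p h v u) (hp : 1 < p)
    (hψ : ContDiff ℝ 2 ψ) (hψ0 : ∀ x, ψ x ≠ 0) (hf : Differentiable ℝ f) :
    Differentiable ℝ (piconeField p (gradient u) ψ fun y => deriv v ‖y‖ * f ‖y‖) := by
  intro x
  by_cases hw : deriv v ‖x‖ = 0
  · exact (hu.hasFDerivAt_piconeField_zero hp hψ (hψ0 x) hf.continuous hw).differentiableAt
  · have hζ := hu.hasGradientAt_deriv_profile_mul (hu.ne_zero_of_deriv_profile_ne_zero hw) (hf _)
    have hψx := (hψ.differentiable two_ne_zero x).hasGradientAt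
    exact (hasGradientAt_sq_div hζ hψx (hψ0 x)).differentiableAt.smul
      (hu.differentiableAt_pAmul_gradient hψ hw)

lemma vdiv_piconeField_deriv_profile_mul_le (hu : IsRadialSolution p h v u) (hp : 1 < p)
    (hψ : ContDiff ℝ 2 ψ) (hψ0 : ψ x ≠ 0)
    (hlin : -vdiv (fun y => pAmul p (gradient u y) (gradient ψ y)) x = c x * ψ x)
    (hf : DifferentiableAt ℝ f ‖x‖) (hw : deriv v ‖x‖ ≠ 0) :
    vdiv (piconeField p (gradient u) ψ fun y => deriv v ‖y‖ * f ‖y‖) x ≤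
      (p - 1) * |deriv v ‖x‖| ^ (p - 2)
          * (deriv (deriv v) ‖x‖ * f ‖x‖ + deriv v ‖x‖ * deriv f ‖x‖) ^ 2
        - c x * (deriv v ‖x‖ * f ‖x‖) ^ 2 := by
  have hx := hu.ne_zero_of_deriv_profile_ne_zero hw
  refine (vdiv_piconeField_le hp.le (hu.hasGradientAt_deriv_profile_mul hx hf)
    (hψ.differentiable two_ne_zero x) hψ0 (hu.differentiableAt_pAmul_gradient hψ hw)).trans_eq ?_
  rw [hu.gradient_eq x, inner_pAmul_div_norm_smul hx _ hw, neg_eq_iff_eq_neg.1 hlin]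
  field

end PiconeField

section RadialTestFunctions

lemma vdiv_piconeField_sub_radialFlux_le (hu : IsRadialSolution p h v u) (hp : 1 < p)
    (hh : Differentiable ℝ h) (hψ : ContDiff ℝ 2 ψ) (hψ0 : ∀ x, ψ x ≠ 0)
    (hlin : ∀ x, -vdiv (fun y => pAmul p (gradient u y) (gradient ψ y)) x = c x * ψ x)
    (hf : Differentiable ℝ f) (hx : x ≠ 0)
    (hw : deriv v ‖x‖ = 0 → deriv (deriv v) ‖x‖ = 0) :
    vdiv (fun y => piconeField p (gradient u) ψ (fun z => deriv v ‖z‖ * f ‖z‖) y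
        - (radialFlux n p h v f ‖y‖ / ‖y‖) • y) x ≤
      radialStabilityDensity p h v c f x := by
  have hx' : ‖x‖ ≠ 0 := norm_ne_zero_iff.2 hx
  have hflux := hu.hasDerivAt_radialFlux hp hx' (hh _) (hf _)
  rw [vdiv_sub (hu.differentiable_piconeField hp hψ hψ0 hf x)
    (differentiableAt_div_norm_smul hx hflux), vdiv_div_norm_smul hx hflux]
  by_cases hwx : deriv v ‖x‖ = 0
  · have hpicone := hu.hasFDerivAt_piconeField_zero hp hψ (hψ0 x) hf.continuous hwx
    simp [vdiv, hpicone.fderiv, radialStabilityDensity, radialFlux, hwx, hw hwx,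
      (by linarith : p ≠ 0)]
  · have hpicone := hu.vdiv_piconeField_deriv_profile_mul_le hp hψ (hψ0 x) (hlin x) (hf _) hwx
    refine (sub_le_sub_right hpicone _).trans_eq ?_
    simp only [radialStabilityDensity, radialFlux, hu.rhs_eq hwx,
      ← abs_rpow_sub_two_mul_sq (by linarith : p ≠ 0)]
    field

theorem dominatesDivergence_radialStabilityDensity (hu : IsRadialSolution p h v u) (hp : 1 < p)
    (hh : Differentiable ℝ h) (hψ : ContDiff ℝ 2 ψ) (hψ0 : ∀ x, ψ x ≠ 0)
    (hlin : ∀ x, -vdiv (fun y => pAmul p (gradient u y) (gradient ψ y)) x = c x * ψ x)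
    (hf : ContDiff ℝ 1 f) (hfc : HasCompactSupport f) :
    DominatesDivergence (radialStabilityDensity p h v c f) := by
  have hfd := hf.differentiable one_ne_zero
  have hpicone := hu.differentiable_piconeField hp hψ hψ0 hfd
  refine ⟨fun y => piconeField p (gradient u) ψ (fun z => deriv v ‖z‖ * f ‖z‖) y
    - (radialFlux n p h v f ‖y‖ / ‖y‖) • y, {0}, Set.countable_singleton 0, ?_, ?_, ?_, ?_⟩
  · exact hpicone.continuous.sub <| continuous_div_norm_smul
      (hu.continuous_radialFlux hp hh.continuous hf.continuous) hu.radialFlux_zero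
  · refine (hasCompactSupport_comp_norm (E := 𝔼 n) hfc).mono fun x => not_imp_not.2 fun hx => ?_
    have hfx : f ‖x‖ = 0 := hx
    simp [piconeField, radialFlux, hfx]
  · intro x hx
    exact (hpicone x).sub (differentiableAt_div_norm_smul hx
      (hu.hasDerivAt_radialFlux hp (norm_ne_zero_iff.2 hx) (hh _) (hfd _)))
  · filter_upwards [Measure.ae_ne volume 0,
      ae_deriv_norm_eq_zero_of_zero volume hu.hasDerivAt_deriv_profile] with x hx hw
    exact hu.vdiv_piconeField_sub_radialFlux_le hp hh hψ hψ0 hlin hfd hx hw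

end RadialTestFunctions

end IsRadialSolution

section Coupling

variable {ι : Type*} [Fintype ι]

lemma two_mul_sqrt_mul_mul_le {s t : ℝ} (hs : 0 ≤ s) (ht : 0 ≤ t) (x y : ℝ) :
    2 * (√(s * t) * x * y) ≤ s * x ^ 2 + t * y ^ 2 := by
  rw [Real.sqrt_mul hs]
  linear_combination sq_nonneg (√s * x - √t * y) + x ^ 2 * Real.sq_sqrt hs + y ^ 2 * Real.sq_sqrt ht

lemma sum_sqrt_mul_le_sum_div_mul_sq {a : ι → ι → ℝ} {ψ : ι → ℝ}
    (hpos : ∀ i j, 0 < a i j * ψ i * ψ j) (x : ι → ℝ) :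
    ∑ i, ∑ j, √(a i j * a j i) * x i * x j ≤ ∑ i, (∑ j, a i j * ψ j) / ψ i * x i ^ 2 := by
  have hψ (i : ι) : ψ i ≠ 0 := right_ne_zero_of_mul (hpos i i).ne'
  have hratio (i j : ι) : 0 ≤ a i j * ψ j / ψ i := by
    have hsq : a i j * ψ j / ψ i = a i j * ψ i * ψ j / ψ i ^ 2 := by
      have := hψ i
      field
    rw [hsq]
    exact div_nonneg (hpos i j).le (sq_nonneg _)
  have hpair (i j : ι) : 2 * (√(a i j * a j i) * x i * x j) ≤
      a i j * ψ j / ψ i * x i ^ 2 + a j i * ψ i / ψ j * x j ^ 2 := by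
    have hprod : a i j * a j i = a i j * ψ j / ψ i * (a j i * ψ i / ψ j) := by
      have := hψ i
      have := hψ j
      field
    rw [hprod]
    exact two_mul_sqrt_mul_mul_le (hratio i j) (hratio j i) _ _
  refine le_of_mul_le_mul_left ?_ (zero_lt_two (α := ℝ))
  calc 2 * ∑ i, ∑ j, √(a i j * a j i) * x i * x j
      = ∑ i, ∑ j, 2 * (√(a i j * a j i) * x i * x j) := by simp only [Finset.mul_sum]
    _ ≤ ∑ i, ∑ j, (a i j * ψ j / ψ i * x i ^ 2 + a j i * ψ i / ψ j * x j ^ 2) := by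
        gcongr with i _ j _
        exact hpair i j
    _ = ∑ i, ∑ j, a i j * ψ j / ψ i * x i ^ 2 + ∑ i, ∑ j, a i j * ψ j / ψ i * x i ^ 2 := by
        simp only [Finset.sum_add_distrib]
        rw [Finset.sum_comm (f := fun i j => a j i * ψ i / ψ j * x j ^ 2)]
    _ = 2 * ∑ i, (∑ j, a i j * ψ j) / ψ i * x i ^ 2 := by
        simp only [← two_mul, ← Finset.sum_mul, ← Finset.sum_div]

lemma hasDerivAt_comp_pi [DecidableEq ι] {G : (ι → ℝ) → ℝ} {γ : ι → ℝ → ℝ} {γ' : ι → ℝ} {r : ℝ}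
    (hG : DifferentiableAt ℝ G fun k => γ k r) (hγ : ∀ k, HasDerivAt (γ k) (γ' k) r) :
    HasDerivAt (fun s => G fun k => γ k s)
      (∑ j, fderiv ℝ G (fun k => γ k r) (Pi.single j 1) * γ' j) r := by
  refine (hG.hasFDerivAt.comp_hasDerivAt r (hasDerivAt_pi.2 hγ)).congr_deriv ?_
  conv_lhs => rw [← Finset.univ_sum_single γ', map_sum]
  refine Finset.sum_congr rfl fun j _ => ?_
  have hsmul : Pi.single j (γ' j) = γ' j • (Pi.single j 1 : ι → ℝ) := by simp [← Pi.single_smul]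
  rw [hsmul, map_smul, smul_eq_mul, mul_comm]

end Coupling

section PolarCoordinates

variable {E : Type*} [NormedAddCommGroup E] [NormedSpace ℝ E] [FiniteDimensional ℝ E]
  [Nontrivial E] [MeasurableSpace E] [BorelSpace E] (μ : Measure E) [μ.IsAddHaarMeasure]

lemma integrable_polar_iff {D : E → ℝ} :
    Integrable (fun q : sphere (0 : E) 1 × Set.Ioi (0 : ℝ) => D (q.2.1 • q.1.1))
      (μ.toSphere.prod (.volumeIoiPow (Module.finrank ℝ E - 1))) ↔ Integrable D μ := by
  have hpunctured : Integrable D μ ↔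
      Integrable (fun x : ({0}ᶜ : Set E) => D x) (μ.comap Subtype.val) := by
    have := integrableOn_iff_comap_subtypeVal (f := D) (μ := μ) (measurableSet_singleton 0).compl
    rwa [IntegrableOn, restrict_compl_singleton] at this
  rw [hpunctured, ← μ.measurePreserving_homeomorphUnitSphereProd.integrable_comp_emb
    (Homeomorph.measurableEmbedding _)]
  refine integrable_congr (.of_forall fun x => ?_)
  simp [smul_smul, norm_ne_zero_iff.2 x.2]

lemma integral_polar (D : E → ℝ) :
    ∫ q : sphere (0 : E) 1 × Set.Ioi (0 : ℝ), D (q.2.1 • q.1.1)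
      ∂(μ.toSphere.prod (.volumeIoiPow (Module.finrank ℝ E - 1))) = ∫ x, D x ∂μ := by
  have hpunctured : ∫ x, D x ∂μ = ∫ x : ({0}ᶜ : Set E), D x ∂(μ.comap Subtype.val) := by
    rw [integral_subtype_comap (measurableSet_singleton _).compl, restrict_compl_singleton]
  rw [hpunctured, ← μ.measurePreserving_homeomorphUnitSphereProd.integral_comp
    (Homeomorph.measurableEmbedding _)]
  refine integral_congr_ae (.of_forall fun x => ?_)
  simp [smul_smul, norm_ne_zero_iff.2 x.2]

lemma integrable_volumeIoiPow_iff {g : ℝ → ℝ} :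
    Integrable (fun r : Set.Ioi (0 : ℝ) => g r) (.volumeIoiPow (Module.finrank ℝ E - 1)) ↔
      Integrable (fun x => g ‖x‖) μ := by
  rw [← integrable_polar_iff μ, ← Integrable.comp_snd_iff μ.toSphere_ne_zero]
  refine integrable_congr (.of_forall fun q => ?_)
  simp [norm_smul, abs_of_pos (Set.mem_Ioi.1 q.2.2)]

lemma integral_volumeIoiPow_nonneg {g : ℝ → ℝ} (hg : 0 ≤ ∫ x, g ‖x‖ ∂μ) :
    0 ≤ ∫ r : Set.Ioi (0 : ℝ), g r ∂(.volumeIoiPow (Module.finrank ℝ E - 1)) := by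
  have hpolar : ∫ x, g ‖x‖ ∂μ =
      μ.toSphere.real Set.univ *
        ∫ r : Set.Ioi (0 : ℝ), g r ∂(.volumeIoiPow (Module.finrank ℝ E - 1)) := by
    rw [← integral_polar, ← smul_eq_mul, ← integral_fun_snd]
    refine integral_congr_ae (.of_forall fun q => ?_)
    simp [norm_smul, abs_of_pos (Set.mem_Ioi.1 q.2.2)]
  rw [hpolar] at hg
  have : NeZero μ.toSphere := ⟨μ.toSphere_ne_zero⟩
  exact nonneg_of_mul_nonneg_right hg measureReal_univ_pos

theorem integral_nonneg_of_forall_sphere {D : E → ℝ} {g : E → ℝ → ℝ} (hD : Integrable D μ)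
    (hle : ∀ θ, ‖θ‖ = 1 → ∀ r > 0, g θ r ≤ D (r • θ))
    (hint : ∀ θ, ‖θ‖ = 1 → Integrable (fun x => g θ ‖x‖) μ)
    (hnonneg : ∀ θ, ‖θ‖ = 1 → 0 ≤ ∫ x, g θ ‖x‖ ∂μ) : 0 ≤ ∫ x, D x ∂μ := by
  have hpolar := (integrable_polar_iff μ).2 hD
  rw [← integral_polar, integral_prod _ hpolar]
  refine integral_nonneg_of_ae ?_
  filter_upwards [hpolar.prod_right_ae] with θ hslice
  have hθ : ‖(θ : E)‖ = 1 := norm_eq_of_mem_sphere θ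
  exact (integral_volumeIoiPow_nonneg μ (hnonneg θ hθ)).trans <|
    integral_mono ((integrable_volumeIoiPow_iff μ).2 (hint θ hθ)) hslice fun r => hle θ hθ r r.2

end PolarCoordinates

lemma integrable_mul_sq {X : Type*} [TopologicalSpace X] [T2Space X] [MeasurableSpace X]
    [OpensMeasurableSpace X] {μ : Measure X} {α g : X → ℝ} (hα : LocallyIntegrable α μ)
    (hg : Continuous g) (hgc : HasCompactSupport g) : Integrable (fun x => α x * g x ^ 2) μ := by
  refine hα.integrable_smul_right_of_hasCompactSupport (g := fun x => g x ^ 2) (hg.pow 2) ?_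
  exact hgc.comp_left (g := fun t => t ^ 2) (zero_pow two_ne_zero)

theorem integral_nonneg_of_forall_radial {E : Type*} [NormedAddCommGroup E] [NormedSpace ℝ E]
    [FiniteDimensional ℝ E] [Nontrivial E] [MeasurableSpace E] [BorelSpace E] {μ : Measure E}
    [μ.IsAddHaarMeasure] {α β : ℝ → ℝ} (hα0 : ∀ r, 0 ≤ α r)
    (hα : LocallyIntegrable (fun x => α ‖x‖) μ) (hβ : LocallyIntegrable (fun x => β ‖x‖) μ)
    (hradial : ∀ f : ℝ → ℝ, ContDiff ℝ 1 f → HasCompactSupport f →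
      0 ≤ ∫ x, (α ‖x‖ * deriv f ‖x‖ ^ 2 + β ‖x‖ * f ‖x‖ ^ 2) ∂μ)
    {φ : E → ℝ} (hφ : ContDiff ℝ 1 φ) (hφc : HasCompactSupport φ) :
    0 ≤ ∫ x, (α ‖x‖ * ‖fderiv ℝ φ x‖ ^ 2 + β ‖x‖ * φ x ^ 2) ∂μ := by
  have hline (θ : E) : ContDiff ℝ 1 fun r : ℝ => φ (r • θ) := by fun_prop
  have hlinec (θ : E) (hθ : ‖θ‖ = 1) : HasCompactSupport fun r : ℝ => φ (r • θ) :=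
    hφc.comp_isClosedEmbedding (isClosedEmbedding_smul_left (norm_ne_zero_iff.1 (by simp [hθ])))
  refine integral_nonneg_of_forall_sphere μ
    (g := fun θ r => α r * deriv (fun s : ℝ => φ (s • θ)) r ^ 2 + β r * φ (r • θ) ^ 2)
    ?_ ?_ ?_ fun θ hθ => hradial _ (hline θ) (hlinec θ hθ)
  · exact (integrable_mul_sq hα (hφ.continuous_fderiv one_ne_zero).norm
      (hφc.fderiv ℝ).norm).add (integrable_mul_sq hβ hφ.continuous hφc)
  · intro θ hθ r hr
    have hsmul : HasDerivAt (fun s : ℝ => s • θ) θ r := by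
      simpa using (hasDerivAt_id r).smul_const θ
    have hderiv : HasDerivAt (fun s : ℝ => φ (s • θ)) (fderiv ℝ φ (r • θ) θ) r :=
      (hφ.differentiable one_ne_zero _).hasFDerivAt.comp_hasDerivAt r hsmul
    have hbound : |fderiv ℝ φ (r • θ) θ| ≤ |‖fderiv ℝ φ (r • θ)‖| := by
      simpa [hθ] using (fderiv ℝ φ (r • θ)).le_opNorm θ
    rw [hderiv.deriv, norm_smul, hθ, mul_one, Real.norm_of_nonneg hr.le]
    gcongr _ * ?_ + _
    · exact hα0 r
    · exact sq_le_sq.2 hbound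
  · intro θ hθ
    have hfc := hasCompactSupport_comp_norm (E := E) (hlinec θ hθ)
    have hfc' := hasCompactSupport_comp_norm (E := E) (hlinec θ hθ).deriv
    exact (integrable_mul_sq hα (((hline θ).continuous_deriv le_rfl).comp continuous_norm)
      hfc').add (integrable_mul_sq hβ ((hline θ).continuous.comp continuous_norm) hfc)

lemma locallyIntegrable_div_norm_sq {E : Type*} [NormedAddCommGroup E] [NormedSpace ℝ E]
    [FiniteDimensional ℝ E] [MeasurableSpace E] [BorelSpace E] {μ : Measure E} [μ.IsAddHaarMeasure]
    (hdim : 2 ≤ Module.finrank ℝ E) {g : ℝ → ℝ} (hg : Continuous fun r => g r / r) :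
    LocallyIntegrable (fun x : E => g ‖x‖ / ‖x‖ ^ 2) μ := by
  have hinv : LocallyIntegrable (fun x : E => ‖x‖⁻¹) μ :=
    locallyIntegrable_of_norm_le_rpow (C := 1) (α := 1) (by lia) (by exact_mod_cast hdim)
      (.of_forall fun x => by simp [Real.rpow_neg_one]) (by fun_prop)
  refine (hinv.mul_continuous (hg.comp continuous_norm)).congr (.of_forall fun x => ?_)
  simp only [Function.comp_apply]
  field

section Systems

variable {ι : Type*} [Fintype ι]

/-- The coefficient of `|∇φ|²` in the stability inequality, as a function of the radius. -/
def energyWeight (p : ℝ) (v : ι → ℝ → ℝ) (r : ℝ) : ℝ :=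
  (p - 1) * ∑ i, |deriv (v i) r| ^ p

/-- The coefficient of `φ²` in the stability inequality, as a function of the radius; `a i j`
stands for `∂ⱼHᵢ(u)`. -/
def potentialWeight (n : ℕ) (p : ℝ) (a : ι → ι → ℝ → ℝ) (v : ι → ℝ → ℝ) (r : ℝ) : ℝ :=
  ∑ i, ∑ j, (a i j r - √(a i j r * a j i r)) * deriv (v i) r * deriv (v j) r
    - (n - 1) * ∑ i, |deriv (v i) r| ^ p / r ^ 2

/-- A radial stable solution `u` of a `p`-Laplacian system, with profiles `v`, right-hand sides
`h i` and coupling coefficients `a i j = ∂ⱼHᵢ(u)`, all three given as functions of the radius. The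
functions `ψ` are the solution of the linearized system that witnesses stability. -/
structure IsRadialStableSystem {n : ℕ} (p : ℝ) (h : ι → ℝ → ℝ) (a : ι → ι → ℝ → ℝ)
    (v : ι → ℝ → ℝ) (u ψ : ι → 𝔼 n → ℝ) : Prop where
  isRadialSolution : ∀ i, IsRadialSolution p (h i) (v i) (u i)
  hasDerivAt_rhs : ∀ i r, HasDerivAt (h i) (∑ j, a i j r * deriv (v j) r) r
  continuous_coupling : ∀ i j, Continuous (a i j)
  contDiff_linearized : ∀ i, ContDiff ℝ 2 (ψ i)
  coupling_pos : ∀ i j x, 0 < a i j ‖x‖ * ψ i x * ψ j x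
  neg_vdiv_linearized_eq : ∀ i x,
    -vdiv (fun y => pAmul p (gradient (u i) y) (gradient (ψ i) y)) x = ∑ j, a i j ‖x‖ * ψ j x

namespace IsRadialStableSystem

variable {n : ℕ} {p : ℝ} {h : ι → ℝ → ℝ} {a : ι → ι → ℝ → ℝ} {v : ι → ℝ → ℝ}
  {u ψ : ι → 𝔼 n → ℝ}

lemma linearized_ne_zero (hS : IsRadialStableSystem p h a v u ψ) (i : ι) (x : 𝔼 n) : ψ i x ≠ 0 :=
  right_ne_zero_of_mul (hS.coupling_pos i i x).ne'

lemma sum_radialStabilityDensity_le (hS : IsRadialStableSystem p h a v u ψ) (f : ℝ → ℝ) (x : 𝔼 n) :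
    ∑ i, radialStabilityDensity p (h i) (v i)
        (fun y => (∑ j, a i j ‖y‖ * ψ j y) / ψ i y) f x ≤
      energyWeight p v ‖x‖ * deriv f ‖x‖ ^ 2 + potentialWeight n p a v ‖x‖ * f ‖x‖ ^ 2 := by
  have hcoupling := mul_le_mul_of_nonneg_right
    (sum_sqrt_mul_le_sum_div_mul_sq (fun i j => hS.coupling_pos i j x)
      fun i => deriv (v i) ‖x‖) (sq_nonneg (f ‖x‖))
  have hrhs : ∑ i, deriv (v i) ‖x‖ * deriv (h i) ‖x‖ =
      ∑ i, ∑ j, a i j ‖x‖ * deriv (v i) ‖x‖ * deriv (v j) ‖x‖ := by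
    refine Finset.sum_congr rfl fun i _ => ?_
    rw [(hS.hasDerivAt_rhs i _).deriv, Finset.mul_sum]
    exact Finset.sum_congr rfl fun j _ => by ring
  simp only [radialStabilityDensity, energyWeight, potentialWeight, Finset.sum_add_distrib,
    Finset.sum_sub_distrib, ← Finset.sum_mul, ← Finset.mul_sum, sub_mul, hrhs] at hcoupling ⊢
  linarith

lemma locallyIntegrable_abs_rpow (hS : IsRadialStableSystem p h a v u ψ) (hp : 1 < p) (i : ι) :
    LocallyIntegrable fun x : 𝔼 n => |deriv (v i) ‖x‖| ^ p := by
  have hderiv := (hS.isRadialSolution i).hasDerivAt_abs_rpow_deriv_profile hp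
  exact ((continuous_iff_continuousAt.2 fun r => (hderiv r).continuousAt).comp
    continuous_norm).locallyIntegrable

lemma locallyIntegrable_coupling (hS : IsRadialStableSystem p h a v u ψ) (i j : ι) :
    LocallyIntegrable fun x : 𝔼 n =>
      (a i j ‖x‖ - √(a i j ‖x‖ * a j i ‖x‖)) * deriv (v i) ‖x‖ * deriv (v j) ‖x‖ := by
  have (k : ι) := (hS.isRadialSolution k).contDiff_profile.continuous_deriv one_le_two
  have := hS.continuous_coupling
  refine Continuous.locallyIntegrable ?_
  fun_prop

lemma locallyIntegrable_energyWeight (hS : IsRadialStableSystem p h a v u ψ) (hp : 1 < p) :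
    LocallyIntegrable fun x : 𝔼 n => energyWeight p v ‖x‖ :=
  (locallyIntegrable_finsetSum _ fun i _ => hS.locallyIntegrable_abs_rpow hp i).smul (p - 1)

lemma dominatesDivergence [NeZero n] (hS : IsRadialStableSystem p h a v u ψ) (hp : 1 < p)
    {f : ℝ → ℝ} (hf : ContDiff ℝ 1 f) (hfc : HasCompactSupport f) :
    DominatesDivergence fun x : 𝔼 n =>
      energyWeight p v ‖x‖ * deriv f ‖x‖ ^ 2 + potentialWeight n p a v ‖x‖ * f ‖x‖ ^ 2 := by
  refine (DominatesDivergence.sum fun i => ?_).mono (hS.sum_radialStabilityDensity_le f)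
  refine (hS.isRadialSolution i).dominatesDivergence_radialStabilityDensity hp
    (fun r => (hS.hasDerivAt_rhs i r).differentiableAt) (hS.contDiff_linearized i)
    (hS.linearized_ne_zero i) (fun x => ?_) hf hfc
  rw [hS.neg_vdiv_linearized_eq, div_mul_cancel₀ _ (hS.linearized_ne_zero i x)]

lemma locallyIntegrable_abs_rpow_div (hS : IsRadialStableSystem p h a v u ψ) (hp : 1 < p)
    (hn : 2 ≤ n) (i : ι) :
    LocallyIntegrable fun x : 𝔼 n => |deriv (v i) ‖x‖| ^ p / ‖x‖ ^ 2 :=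
  have : NeZero n := ⟨by lia⟩
  locallyIntegrable_div_norm_sq (by simpa)
    ((hS.isRadialSolution i).continuous_abs_rpow_deriv_profile_div_id hp)

lemma locallyIntegrable_potentialWeight (hS : IsRadialStableSystem p h a v u ψ) (hp : 1 < p)
    (hn : 2 ≤ n) : LocallyIntegrable fun x : 𝔼 n => potentialWeight n p a v ‖x‖ :=
  (locallyIntegrable_finsetSum _ fun i _ => locallyIntegrable_finsetSum _ fun j _ =>
    hS.locallyIntegrable_coupling i j).sub <|
    (locallyIntegrable_finsetSum _ fun i _ =>
      hS.locallyIntegrable_abs_rpow_div hp hn i).smul ((n : ℝ) - 1)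

theorem integral_weights_nonneg (hS : IsRadialStableSystem p h a v u ψ) (hp : 1 < p) (hn : 2 ≤ n)
    {φ : 𝔼 n → ℝ} (hφ : ContDiff ℝ 1 φ) (hφc : HasCompactSupport φ) :
    0 ≤ ∫ x, (energyWeight p v ‖x‖ * ‖fderiv ℝ φ x‖ ^ 2
      + potentialWeight n p a v ‖x‖ * φ x ^ 2) := by
  have : NeZero n := ⟨by lia⟩
  have henergy := hS.locallyIntegrable_energyWeight hp
  have hpotential := hS.locallyIntegrable_potentialWeight hp hn
  refine integral_nonneg_of_forall_radial (fun r => ?_) henergy hpotential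
    (fun f hf hfc => (hS.dominatesDivergence hp hf hfc).integral_nonneg ?_) hφ hφc
  · exact mul_nonneg (by linarith) (Finset.sum_nonneg fun i _ => by positivity)
  · exact (integrable_mul_sq henergy ((hf.continuous_deriv le_rfl).comp continuous_norm)
      (hasCompactSupport_comp_norm hfc.deriv)).add
      (integrable_mul_sq hpotential (hf.continuous.comp continuous_norm)
        (hasCompactSupport_comp_norm hfc))

theorem stability_inequality (hS : IsRadialStableSystem p h a v u ψ) (hp : 1 < p) (hn : 2 ≤ n)
    {φ : 𝔼 n → ℝ} (hφ : ContDiff ℝ 1 φ) (hφc : HasCompactSupport φ) :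
    (n - 1) * ∑ i, ∫ x : 𝔼 n, |deriv (v i) ‖x‖| ^ p / ‖x‖ ^ 2 * φ x ^ 2 ≤
      (p - 1) * (∑ i, ∫ x : 𝔼 n, |deriv (v i) ‖x‖| ^ p * ‖fderiv ℝ φ x‖ ^ 2)
        + ∑ i, ∑ j, ∫ x : 𝔼 n, (a i j ‖x‖ - √(a i j ‖x‖ * a j i ‖x‖))
          * deriv (v i) ‖x‖ * deriv (v j) ‖x‖ * φ x ^ 2 := by
  have hnonneg := hS.integral_weights_nonneg hp hn hφ hφc
  have hgrad (i : ι) := integrable_mul_sq (hS.locallyIntegrable_abs_rpow hp i)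
    (hφ.continuous_fderiv one_ne_zero).norm (hφc.fderiv ℝ).norm
  have hhardy (i : ι) := integrable_mul_sq (hS.locallyIntegrable_abs_rpow_div hp hn i)
    hφ.continuous hφc
  have hcoupling (i j : ι) := integrable_mul_sq (hS.locallyIntegrable_coupling i j)
    hφ.continuous hφc
  have hgrad_sum := integrable_finsetSum univ fun i _ => hgrad i
  have hhardy_sum := integrable_finsetSum univ fun i _ => hhardy i
  have hcoupling_sum (i : ι) := integrable_finsetSum univ fun j _ => hcoupling i j
  have hcoupling_sum_sum := integrable_finsetSum univ fun i _ => hcoupling_sum i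
  simp only [energyWeight, potentialWeight, sub_mul (∑ _, _), mul_assoc (_ - _) (∑ _, _),
    Finset.sum_mul] at hnonneg
  rw [integral_add (hgrad_sum.const_mul _) (hcoupling_sum_sum.sub' (hhardy_sum.const_mul _)),
    integral_sub hcoupling_sum_sum (hhardy_sum.const_mul _), integral_const_mul,
    integral_const_mul, integral_finsetSum _ fun i _ => hgrad i,
    integral_finsetSum _ fun i _ => hhardy i,
    integral_finsetSum _ fun i _ => hcoupling_sum i] at hnonneg
  simp only [fun i => integral_finsetSum univ fun j _ => hcoupling i j] at hnonneg
  linarith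

end IsRadialStableSystem

end Systems

/-- **Radial stability inequality**: if `u` is a radial stable solution of the
p-Laplacian system `-div(|∇uᵢ|^{p-2}∇uᵢ) = Hᵢ(u)` on `ℝⁿ`, `uᵢ(x) = vᵢ(|x|)`, then
for every bounded compactly supported test function `φ`:
`(n-1) ∑ᵢ ∫ |vᵢ'|^p |x|⁻² φ² ≤ (p-1) ∑ᵢ ∫ |vᵢ'|^p |∇φ|²
  + ∑_{i,j} ∫ (∂ⱼHᵢ(u) - √(∂ⱼHᵢ(u)∂ᵢHⱼ(u))) vᵢ'vⱼ' φ²`. -/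
theorem radial_stability_inequality
    (n m : ℕ) (hn : 2 ≤ n) (hm : 1 ≤ m) (p : ℝ) (hp : 1 < p)
    (H : Fin m → (Fin m → ℝ) → ℝ) (hH : ∀ i, ContDiff ℝ 1 (H i))
    (u : Fin m → EuclideanSpace ℝ (Fin n) → ℝ)
    (hu : ∀ i, ContDiff ℝ 2 (u i))
    (hsol : ∀ i x, -vdiv (fun y =>
        ‖gradient (u i) y‖ ^ (p - 2) • gradient (u i) y) x
        = H i (fun j => u j x))
    -- `u` is radial
    (v : Fin m → ℝ → ℝ) (hv : ∀ i, ContDiff ℝ 2 (v i))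
    (hrad : ∀ i x, u i x = v i ‖x‖)
    (hcoupling : ∀ (i j : Fin m) (x : EuclideanSpace ℝ (Fin n)),
      0 < fderiv ℝ (H i) (fun k => u k x) (Pi.single j 1)
        * fderiv ℝ (H j) (fun k => u k x) (Pi.single i 1))
    -- stability: there is a sign-coherent solution of the linearized system
    (hstable : ∃ φ : Fin m → EuclideanSpace ℝ (Fin n) → ℝ,
      (∀ i, ContDiff ℝ 2 (φ i)) ∧ (∀ i x, φ i x ≠ 0) ∧
      (∀ (i j : Fin m) (x : EuclideanSpace ℝ (Fin n)),
        0 < fderiv ℝ (H i) (fun k => u k x) (Pi.single j 1) * φ i x * φ j x) ∧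
      (∀ i x, -vdiv (fun y => pAmul p (gradient (u i) y) (gradient (φ i) y)) x
        = ∑ j, fderiv ℝ (H i) (fun k => u k x) (Pi.single j 1) * φ j x)) :
    ∀ φ : EuclideanSpace ℝ (Fin n) → ℝ,
      ContDiff ℝ 1 φ → HasCompactSupport φ → (∃ C : ℝ, ∀ x, |φ x| ≤ C) →
      ((n : ℝ) - 1) * ∑ i, ∫ x : EuclideanSpace ℝ (Fin n),
          |deriv (v i) ‖x‖| ^ p * ‖x‖ ^ (-2 : ℝ) * (φ x) ^ 2
        ≤ (p - 1) * (∑ i, ∫ x : EuclideanSpace ℝ (Fin n),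
              |deriv (v i) ‖x‖| ^ p * ‖gradient φ x‖ ^ 2)
          + ∑ i, ∑ j, ∫ x : EuclideanSpace ℝ (Fin n),
              (fderiv ℝ (H i) (fun k => u k x) (Pi.single j 1)
                - Real.sqrt (fderiv ℝ (H i) (fun k => u k x) (Pi.single j 1)
                    * fderiv ℝ (H j) (fun k => u k x) (Pi.single i 1)))
                * deriv (v i) ‖x‖ * deriv (v j) ‖x‖ * (φ x) ^ 2 := by
  intro φ hφ hφc _
  obtain ⟨ψ, hψ, -, hpos, hlin⟩ := hstable
  have hu_eq (x : 𝔼 n) : (fun k => u k x) = fun k => v k ‖x‖ := funext fun k => hrad k x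
  have hinv (x : 𝔼 n) : ‖x‖ ^ (-2 : ℝ) = (‖x‖ ^ 2)⁻¹ := by
    rw [Real.rpow_neg (norm_nonneg x), Real.rpow_two]
  have hgrad (x : 𝔼 n) : ‖gradient φ x‖ = ‖fderiv ℝ φ x‖ := by simp [gradient]
  simp only [hu_eq] at hsol hpos hlin
  have hS : IsRadialStableSystem p (fun i r => H i fun k => v k r)
      (fun i j r => fderiv ℝ (H i) (fun k => v k r) (Pi.single j 1)) v u ψ :=
    { isRadialSolution i := ⟨hu i, hv i, hrad i, hsol i⟩
      hasDerivAt_rhs i r := hasDerivAt_comp_pi ((hH i).differentiable one_ne_zero _) fun k =>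
        ((hv k).differentiable two_ne_zero r).hasDerivAt
      continuous_coupling i j := (((hH i).continuous_fderiv one_ne_zero).comp <|
        continuous_pi fun k => (hv k).continuous).clm_apply continuous_const
      contDiff_linearized := hψ
      coupling_pos := hpos
      neg_vdiv_linearized_eq := hlin }
  simpa only [hu_eq, hinv, hgrad, ← div_eq_mul_inv] using hS.stability_inequality hp hn hφ hφc
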